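/- (Theorem 2.1) Let γ_{n+1} ≠ 0 for all n ≥ 0, let (θ_n)_{n≥1} be real numbers with θ_n ≠ 0, and adopt the conventions θ_0 = 1 and μ_{−1} = 2μ − 1. Then the following are equivalent: (i) for all n ≥ 1, ξ_{n+1}·θ_{n+1}·θ_n + ξ_n = 2·θ_n, and for all n ≥ 0, ξ_{n+1}·μ_{n+1}·(μ_{n+3}θ_{n+1} − μ_{n+2})·γ_{n+2} = ξ_{n+2}·μ_{n+2}·(μ_n θ_n − μ_{n−1})·γ_{n+1}; (ii) the polynomials Q_n = μ_{n+1}^{−1}·T_μ P_{n+1} satisfy Q_{n+2}(x) = x·Q_{n+1}(x) − γ̃_{n+1}·Q_n(x) for all n ≥ 0, where γ̃_n = (μ_n/μ_{n+1})·θ_n·γ_{n+1} for n ≥ 1 (note Q_0 = 1 and Q_1(x) = x hold automatically, and γ̃_n ≠ 0, so {Q_n} is a symmetric monic orthogonal polynomial sequence). -/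

import Mathlib

/-!
For `f` of parity `(-1)^n` the Dunkl operator satisfies `T (x f) = x T f + ξ_n f`, so the
recurrence of the `P_n` gives
`T P_{n+2} = x T P_{n+1} + ξ_{n+1} P_{n+1} - γ_{n+1} T P_n` (`dunkl_rec`).

Let `R_n` be the monic polynomials with recurrence coefficients `γ̃_n` (`auxR`), and put
`a_{n+1} = μ_n γ_{n+1} (1 - θ_n) / ξ_{n+1}` (`auxA`). Condition (ii) says `T P_{n+1} = μ_{n+1} R_n`
for all `n`. Since `ξ_n = μ_{n+1} - μ_n ≠ 0`, the displayed identity shows that this is equivalent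
to `P_{n+2} = R_{n+2} + a_{n+2} R_n` for all `n` (`derivative_iff_connection`). Inserting this
connection formula into the recurrence of the `P_n` and comparing coefficients of `R_n` and
`R_{n-2}`, it is equivalent to the two scalar systems
`a_{n+2} = γ̃_{n+1} + a_{n+1} - γ_{n+1}` and `a_{n+3} γ̃_{n+1} = γ_{n+3} a_{n+2}`
(`connection_iff_scalar`). Clearing denominators, the first is the recurrence for `γ` and the
second is the Riccati equation for `θ` (`scalar_iff_system`).
-/

open Polynomial

/-- The one-dimensional Dunkl operator `T_μ`:
`(T_μ f)(x) = f'(x) + μ (f(x) - f(-x))/x`. -/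
noncomputable def dunkl (μ : ℝ) (f : ℝ[X]) : ℝ[X] :=
  derivative f + C μ * ((f - f.comp (-X)) /ₘ X)

/-- `μ_k = k + μ(1 - (-1)^k)`; note `μ_{-1} = 2μ - 1`. -/
noncomputable def muI (μ : ℝ) (k : ℤ) : ℝ := k + μ * (1 - (-1 : ℝ) ^ k)

/-- `ξ_k = 1 + 2μ(-1)^k`. -/
noncomputable def xiI (μ : ℝ) (k : ℤ) : ℝ := 1 + 2 * μ * (-1 : ℝ) ^ k

/-! ### The Dunkl operator -/

lemma X_mul_dunkl (μ : ℝ) (f : ℝ[X]) :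
    X * dunkl μ f = X * derivative f + C μ * (f - f.comp (-X)) := by
  have h : X * ((f - f.comp (-X)) /ₘ X) = f - f.comp (-X) := by
    have hd : (X : ℝ[X]) ∣ f - f.comp (-X) := by
      rw [X_dvd_iff, coeff_zero_eq_eval_zero]
      simp
    have := modByMonic_add_div (f - f.comp (-X)) (X : ℝ[X])
    rwa [(modByMonic_eq_zero_iff_dvd monic_X).2 hd, zero_add] at this
  unfold dunkl
  linear_combination (C μ) * h

lemma dunkl_one (μ : ℝ) : dunkl μ 1 = 0 := by
  simp [dunkl]

lemma dunkl_X (μ : ℝ) : dunkl μ X = C (1 + 2 * μ) := by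
  apply mul_left_cancel₀ (X_ne_zero (R := ℝ))
  rw [X_mul_dunkl]
  simp only [derivative_X, X_comp, map_add, map_mul, map_one, map_ofNat]
  ring

lemma P_comp_neg (γ : ℕ → ℝ) (P : ℕ → ℝ[X]) (hP0 : P 0 = 1) (hP1 : P 1 = X)
    (hPrec : ∀ n : ℕ, P (n + 2) = X * P (n + 1) - C (γ (n + 1)) * P n) (n : ℕ) :
    (P n).comp (-X) = (-1) ^ n * P n := by
  induction n using Nat.twoStepInduction with
  | zero => simp [hP0]
  | one => simp [hP1]
  | more n h0 h1 =>
    rw [hPrec]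
    simp only [sub_comp, mul_comp, X_comp, C_comp, h0, h1]
    ring

lemma dunkl_rec (μ : ℝ) (γ : ℕ → ℝ) (P : ℕ → ℝ[X]) (hP0 : P 0 = 1) (hP1 : P 1 = X)
    (hPrec : ∀ n : ℕ, P (n + 2) = X * P (n + 1) - C (γ (n + 1)) * P n) (n : ℕ) :
    dunkl μ (P (n + 2)) = X * dunkl μ (P (n + 1)) + C (1 + 2 * μ * (-1) ^ (n + 1)) * P (n + 1)
      - C (γ (n + 1)) * dunkl μ (P n) := by
  apply mul_left_cancel₀ (X_ne_zero (R := ℝ))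
  have h0 := X_mul_dunkl μ (P n)
  have h1 := X_mul_dunkl μ (P (n + 1))
  have h2 := X_mul_dunkl μ (P (n + 2))
  rw [P_comp_neg γ P hP0 hP1 hPrec] at h0 h1 h2
  rw [hPrec n] at h2
  simp only [derivative_sub, derivative_mul, derivative_X, derivative_C] at h2
  rw [hPrec n, h2]
  simp only [map_add, map_mul, map_pow, map_neg, map_one, map_ofNat]
  linear_combination (-X) * h1 + C (γ (n + 1)) * h0

/-! ### The polynomials `R_n` and the connection formula -/

/-- Monic symmetric polynomials with recurrence coefficients `g`:
`R_{n+2} = x R_{n+1} - g_n R_n`. The index of `g` is shifted, `g n` standing for `γ̃_{n+1}`. -/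
noncomputable def auxR (g : ℕ → ℝ) : ℕ → ℝ[X]
  | 0 => 1
  | 1 => X
  | n + 2 => X * auxR g (n + 1) - C (g n) * auxR g n

lemma auxR_coeff (g : ℕ → ℝ) (n : ℕ) :
    (auxR g n).coeff n = 1 ∧ ∀ k, n < k → (auxR g n).coeff k = 0 := by
  induction n using Nat.twoStepInduction with
  | zero =>
    refine ⟨by simp [auxR], fun k hk => ?_⟩
    simp [auxR, coeff_one, hk.ne']
  | one =>
    refine ⟨by simp [auxR], fun k hk => ?_⟩
    simp [auxR, coeff_X, hk.ne]
  | more n h0 h1 =>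
    refine ⟨?_, fun k hk => ?_⟩
    · simp [auxR, coeff_X_mul, h1.1, h0.2 (n + 2) (by omega)]
    · obtain ⟨k, rfl⟩ : ∃ j, k = j + 1 := ⟨k - 1, by omega⟩
      simp [auxR, coeff_X_mul, h1.2 k (by omega), h0.2 (k + 1) (by omega)]

lemma auxR_smul_eq_zero {g : ℕ → ℝ} {n : ℕ} {c : ℝ} (h : C c * auxR g n = 0) : c = 0 := by
  have := congrArg (fun p => coeff p n) h
  simpa [(auxR_coeff g n).1] using this

lemma auxR_indep {g : ℕ → ℝ} {n : ℕ} {c d : ℝ}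
    (h : C c * auxR g (n + 2) + C d * auxR g n = 0) : c = 0 ∧ d = 0 := by
  have hc : c = 0 := by
    have := congrArg (fun p => coeff p (n + 2)) h
    simpa [(auxR_coeff g (n + 2)).1, (auxR_coeff g n).2 (n + 2) (by omega)] using this
  subst hc
  exact ⟨rfl, auxR_smul_eq_zero (g := g) (n := n) (by simpa using h)⟩

lemma connection_iff_scalar (γ g a : ℕ → ℝ) (ha1 : a 1 = 0) (P : ℕ → ℝ[X])
    (hP0 : P 0 = 1) (hP1 : P 1 = X)
    (hPrec : ∀ n : ℕ, P (n + 2) = X * P (n + 1) - C (γ (n + 1)) * P n) :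
    (∀ n, P (n + 2) = auxR g (n + 2) + C (a (n + 2)) * auxR g n) ↔
    ((∀ n, a (n + 2) = g n + a (n + 1) - γ (n + 1)) ∧
      ∀ n, a (n + 3) * g n = γ (n + 3) * a (n + 2)) := by
  have hR : ∀ n, auxR g (n + 2) = X * auxR g (n + 1) - C (g n) * auxR g n := fun n => rfl
  have hR0 : auxR g 0 = 1 := rfl
  have hR1 : auxR g 1 = X := rfl
  constructor
  · intro h
    have key : ∀ n, a (n + 4) = g (n + 2) + a (n + 3) - γ (n + 3) ∧
        a (n + 3) * g n = γ (n + 3) * a (n + 2) := by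
      intro n
      have e : C (g (n + 2) + a (n + 3) - γ (n + 3) - a (n + 4)) * auxR g (n + 2)
          + C (a (n + 3) * g n - γ (n + 3) * a (n + 2)) * auxR g n = 0 := by
        have h1 := hPrec (n + 2)
        rw [h n, h (n + 1), h (n + 2)] at h1
        simp only [map_add, map_sub, map_mul]
        linear_combination -h1 + hR (n + 2) + C (a (n + 3)) * hR n
      have := auxR_indep e
      exact ⟨by linarith [this.1], by linarith [this.2]⟩
    refine ⟨fun n => ?_, fun n => (key n).2⟩
    match n with
    | 0 =>
      have e : C (g 0 + a 1 - γ 1 - a 2) * auxR g 0 = 0 := by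
        have h1 := hPrec 0
        rw [h 0, hR 0, hR0] at h1
        simp only [zero_add, hP0, hP1, hR1] at h1
        simp only [map_add, map_sub, hR0, ha1, map_zero]
        linear_combination -h1
      linarith [auxR_smul_eq_zero e]
    | 1 =>
      have e : C (g 1 + a 2 - γ 2 - a 3) * auxR g 1 = 0 := by
        have h1 := hPrec 1
        rw [h 1, h 0, hR 1] at h1
        simp only [zero_add, hP1, hR1, hR0, Nat.reduceAdd] at h1
        simp only [map_add, map_sub, hR1]
        linear_combination -h1
      linarith [auxR_smul_eq_zero e]
    | n + 2 => exact (key n).1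
  · rintro ⟨hA, hB⟩ n
    have hA' : ∀ n, C (a (n + 2)) = C (g n) + C (a (n + 1)) - C (γ (n + 1)) := fun n => by
      rw [hA n]; simp
    have hB' : ∀ n, C (a (n + 3)) * C (g n) = C (γ (n + 3)) * C (a (n + 2)) := fun n => by
      rw [← C_mul, hB n, C_mul]
    induction n using Nat.twoStepInduction with
    | zero =>
      rw [hPrec, hR, hA']
      simp only [zero_add, hP0, hP1, hR1, hR0, ha1, map_zero]
      ring
    | one =>
      have h2 : P 2 = auxR g 2 + C (a 2) * auxR g 0 := by
        rw [hPrec 0, hR 0, hA' 0]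
        simp only [zero_add, hP0, hP1, hR1, hR0, ha1, map_zero]
        ring
      rw [hPrec 1, hR 1, hA' 1]
      simp only [Nat.reduceAdd, h2, hP1, hR1, hR0]
      ring
    | more n h0 h1 =>
      rw [hPrec (n + 2), h0, h1]
      linear_combination -hR (n + 2) - auxR g (n + 2) * hA' (n + 2)
        - C (a (n + 3)) * hR n + auxR g n * hB' n

/-! ### Passing from `T P_n` to the connection formula -/

/-- The connection coefficients, `a_0 = 0` and `a_{n+1} = μ_n γ_{n+1} (1 - θ_n) / ξ_{n+1}`. Here
`m` and `e` stand for the sequences `μ_n` and `ξ_n`. -/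
noncomputable def auxA (m e γ θ : ℕ → ℝ) : ℕ → ℝ
  | 0 => 0
  | k + 1 => m k * γ (k + 1) * (1 - θ k) / e (k + 1)

lemma derivative_iff_connection (m e γ θ g : ℕ → ℝ)
    (hm : ∀ k, m (k + 1) = m k + e k) (he0 : ∀ k, e k ≠ 0) (hmne : ∀ k, m (k + 1) ≠ 0)
    (hg : ∀ n, g n = m (n + 1) / m (n + 2) * θ (n + 1) * γ (n + 2))
    (P D : ℕ → ℝ[X]) (hP1 : P 1 = X)
    (hD0 : D 0 = 0) (hD1 : D 1 = C (m 1))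
    (hD : ∀ n, D (n + 2) = X * D (n + 1) + C (e (n + 1)) * P (n + 1) - C (γ (n + 1)) * D n) :
    (∀ n, C ((m (n + 3))⁻¹) * D (n + 3) = X * (C ((m (n + 2))⁻¹) * D (n + 2))
      - C (g n) * (C ((m (n + 1))⁻¹) * D (n + 1))) ↔
    (∀ n, P (n + 2) = auxR g (n + 2) + C (auxA m e γ θ (n + 2)) * auxR g n) := by
  have hR : ∀ n, auxR g (n + 2) = X * auxR g (n + 1) - C (g n) * auxR g n := fun n => rfl
  have hR0 : auxR g 0 = 1 := rfl
  have hR1 : auxR g 1 = X := rfl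
  have hinv : ∀ k, C ((m (k + 1))⁻¹) * C (m (k + 1)) = (1 : ℝ[X]) := fun k => by
    rw [← C_mul, inv_mul_cancel₀ (hmne k), C_1]
  have hm' : ∀ k, (C (m (k + 1)) : ℝ[X]) = C (m k) + C (e k) := fun k => by
    rw [hm k, C_add]
  have hea : ∀ k, C (e (k + 2)) * C (auxA m e γ θ (k + 2))
      = (C (m (k + 1)) * C (γ (k + 2)) - C (m (k + 2)) * C (g k) : ℝ[X]) := fun k => by
    rw [← C_mul, ← C_mul, ← C_mul, ← C_sub]
    congr 1
    have h1 := he0 (k + 2)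
    have h2 := hmne (k + 1)
    rw [hg]
    simp only [auxA]
    field_simp
  have hD2 : D 2 = C (m 2) * auxR g 1 := by
    rw [hD 0, hm' 1]
    simp only [zero_add, hD0, hD1, hP1, hR1]
    ring
  -- Both sides are compared with `D_{n+1} = μ_{n+1} R_n`, where `D_n` stands for `T P_n`.
  have hmid : (∀ n, C ((m (n + 3))⁻¹) * D (n + 3) = X * (C ((m (n + 2))⁻¹) * D (n + 2))
      - C (g n) * (C ((m (n + 1))⁻¹) * D (n + 1))) ↔ ∀ n, D (n + 1) = C (m (n + 1)) * auxR g n := by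
    constructor
    · intro h n
      induction n using Nat.twoStepInduction with
      | zero => simp [hD1, hR0]
      | one => exact hD2
      | more n h0 h1 =>
        have h2 := h n
        rw [h0, h1] at h2
        rw [hR]
        linear_combination C (m (n + 3)) * h2 - D (n + 3) * hinv (n + 2)
          + C (m (n + 3)) * X * auxR g (n + 1) * hinv (n + 1)
          - C (m (n + 3)) * C (g n) * auxR g n * hinv n
    · intro h n
      rw [h n, h (n + 1), h (n + 2), hR n]
      linear_combination (X * auxR g (n + 1) - C (g n) * auxR g n) * hinv (n + 2)
          - X * auxR g (n + 1) * hinv (n + 1)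
          + C (g n) * auxR g n * hinv n
  rw [hmid]
  constructor
  · intro h n
    have hne : (C (e (n + 2)) : ℝ[X]) ≠ 0 := C_ne_zero.2 (he0 _)
    apply mul_left_cancel₀ hne
    have h3 := hD (n + 1)
    rw [h n, h (n + 1), h (n + 2), hm' (n + 2)] at h3
    linear_combination -h3 + C (m (n + 2)) * hR n - auxR g n * hea n
  · intro h n
    induction n using Nat.twoStepInduction with
    | zero => simp [hD1, hR0]
    | one => exact hD2
    | more n h0 h1 =>
      rw [hD (n + 1), h0, h1, h n, hm' (n + 2)]
      linear_combination -C (m (n + 2)) * hR n + auxR g n * hea n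

/-! ### The scalar systems -/

lemma eq_iff_eq_of_mul_sub {x y z w c d : ℝ} (hd : d ≠ 0) (hc : c ≠ 0)
    (h : d * (x - y) = c * (z - w)) : x = y ↔ z = w := by
  rw [← sub_eq_zero, ← sub_eq_zero (a := z), ← mul_eq_zero_iff_left hd, h,
    mul_eq_zero_iff_left hc]

lemma scalar_iff_system (m e γ θ g : ℕ → ℝ) (hγ : ∀ n, γ (n + 1) ≠ 0)
    (hm : ∀ k, m (k + 1) = m k + e k) (he2 : ∀ k, e (k + 1) = 2 - e k)
    (he0 : ∀ k, e k ≠ 0) (hmne : ∀ k, m (k + 1) ≠ 0)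
    (hg : ∀ n, g n = m (n + 1) / m (n + 2) * θ (n + 1) * γ (n + 2)) :
    ((∀ n, 1 ≤ n → e (n + 1) * θ (n + 1) * θ n + e n = 2 * θ n) ∧
      ∀ n, e (n + 1) * m (n + 1) * (m (n + 3) * θ (n + 1) - m (n + 2)) * γ (n + 2)
        = e (n + 2) * m (n + 2) * (m n * θ n - (m n - e (n + 1))) * γ (n + 1)) ↔
    ((∀ n, auxA m e γ θ (n + 2) = g n + auxA m e γ θ (n + 1) - γ (n + 1)) ∧
      ∀ n, auxA m e γ θ (n + 3) * g n = γ (n + 3) * auxA m e γ θ (n + 2)) := by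
  rw [and_comm]
  refine and_congr (forall_congr' fun n => ?_) ?_
  · have h1 := he0 (n + 1)
    have h2 := he0 (n + 2)
    have h3 := hmne (n + 1)
    have h4 := hm (n + 2)
    rw [hg, h4]
    simp only [auxA]
    have hne : e (n + 1) * e (n + 2) * m (n + 2) ≠ 0 := mul_ne_zero (mul_ne_zero h1 h2) h3
    refine eq_iff_eq_of_mul_sub (neg_ne_zero.2 one_ne_zero) hne ?_
    field_simp
    ring
  · have hstep : ∀ n, (e (n + 2) * θ (n + 2) * θ (n + 1) + e (n + 1) = 2 * θ (n + 1)) ↔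
        auxA m e γ θ (n + 3) * g n = γ (n + 3) * auxA m e γ θ (n + 2) := by
      intro n
      have h2 := he0 (n + 2)
      have h1 := he0 (n + 1)
      have h3 := hmne (n + 1)
      have h4 := hmne n
      have h5 := hγ (n + 1)
      have h6 := hγ (n + 2)
      have e3 : e (n + 3) = e (n + 1) := by rw [he2 (n + 2), he2 (n + 1)]; ring
      have e2 := he2 (n + 1)
      have hne : e (n + 1) * e (n + 2) ≠ 0 := mul_ne_zero h1 h2
      have hne' : -(m (n + 1) * γ (n + 2) * γ (n + 3)) ≠ 0 :=
        neg_ne_zero.2 (mul_ne_zero (mul_ne_zero h4 h5) h6)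
      rw [hg]
      simp only [auxA]
      rw [e3]
      refine eq_iff_eq_of_mul_sub hne' hne ?_
      field_simp
      linear_combination (-θ (n + 1)) * e2
    constructor
    · intro h n
      exact (hstep n).1 (h (n + 1) (by omega))
    · intro h n hn
      obtain ⟨k, rfl⟩ : ∃ k, n = k + 1 := ⟨n - 1, by omega⟩
      exact (hstep k).2 (h k)

/-! ### The sequences `μ_n` and `ξ_n` -/

lemma muI_succ (μ : ℝ) (k : ℤ) : muI μ (k + 1) = muI μ k + xiI μ k := by
  simp only [muI, xiI, zpow_add₀ (show (-1 : ℝ) ≠ 0 by norm_num), zpow_one]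
  push_cast
  ring

lemma xiI_succ (μ : ℝ) (k : ℤ) : xiI μ (k + 1) = 2 - xiI μ k := by
  simp only [xiI, zpow_add₀ (show (-1 : ℝ) ≠ 0 by norm_num), zpow_one]
  ring

lemma xiI_ne_zero {μ : ℝ} (hμ2 : μ ≠ 1 / 2) (hμ3 : μ ≠ -1 / 2) (k : ℕ) : xiI μ k ≠ 0 := by
  intro h
  rw [xiI, zpow_natCast] at h
  rcases neg_one_pow_eq_or ℝ k with hk | hk <;> rw [hk] at h
  · exact hμ3 (by linarith)
  · exact hμ2 (by linarith)

lemma muI_ne_zero {μ : ℝ} (hμ1 : ∀ k : ℕ, μ ≠ -(k : ℝ) - 1 / 2) (k : ℕ) :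
    muI μ ((k + 1 : ℕ) : ℤ) ≠ 0 := by
  intro h
  rw [muI, zpow_natCast] at h
  rcases Nat.even_or_odd' k with ⟨j, rfl | rfl⟩
  · rw [(show Odd (2 * j + 1) from ⟨j, rfl⟩).neg_one_pow] at h
    push_cast at h
    exact hμ1 j (by linarith)
  · rw [(show Even (2 * j + 1 + 1) from ⟨j + 1, by ring⟩).neg_one_pow] at h
    push_cast at h
    have : (0 : ℝ) ≤ j := j.cast_nonneg
    linarith

/-- **Statement 4 (Theorem 2.1).** With `θ_0 = 1` (and `μ_{-1} = 2μ - 1`), the system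
consisting of the Riccati equation `ξ_{n+1} θ_{n+1} θ_n + ξ_n = 2 θ_n` (`n ≥ 1`) and the
recurrence `ξ_{n+1} μ_{n+1} (μ_{n+3} θ_{n+1} - μ_{n+2}) γ_{n+2}
= ξ_{n+2} μ_{n+2} (μ_n θ_n - μ_{n-1}) γ_{n+1}` (`n ≥ 0`)
holds if and only if the polynomials `Q_n = μ_{n+1}⁻¹ T_μ P_{n+1}` satisfy
`Q_{n+2} = x Q_{n+1} - γ̃_{n+1} Q_n` with `γ̃_n = (μ_n/μ_{n+1}) θ_n γ_{n+1}`. -/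
theorem dunkl_classical_iff (μ : ℝ)
    (hμ1 : ∀ k : ℕ, μ ≠ -(k : ℝ) - 1 / 2) (hμ2 : μ ≠ 1 / 2) (hμ3 : μ ≠ -1 / 2)
    (γ : ℕ → ℝ) (hγ : ∀ n : ℕ, γ (n + 1) ≠ 0)
    (θ : ℕ → ℝ) (hθ0 : θ 0 = 1) (hθ : ∀ n : ℕ, 1 ≤ n → θ n ≠ 0)
    (P : ℕ → ℝ[X]) (hP0 : P 0 = 1) (hP1 : P 1 = X)
    (hPrec : ∀ n : ℕ, P (n + 2) = X * P (n + 1) - C (γ (n + 1)) * P n) :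
    ((∀ n : ℕ, 1 ≤ n →
        xiI μ (n + 1) * θ (n + 1) * θ n + xiI μ n = 2 * θ n) ∧
     (∀ n : ℕ,
        xiI μ (n + 1) * muI μ (n + 1) * (muI μ (n + 3) * θ (n + 1) - muI μ (n + 2)) * γ (n + 2)
          = xiI μ (n + 2) * muI μ (n + 2) * (muI μ n * θ n - muI μ ((n : ℤ) - 1)) * γ (n + 1)))
    ↔
    (∀ n : ℕ,
      C ((muI μ (n + 3))⁻¹) * dunkl μ (P (n + 3)) =
        X * (C ((muI μ (n + 2))⁻¹) * dunkl μ (P (n + 2)))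
          - C (muI μ (n + 1) / muI μ (n + 2) * θ (n + 1) * γ (n + 2)) *
            (C ((muI μ (n + 1))⁻¹) * dunkl μ (P (n + 1)))) := by
  have hm : ∀ k : ℕ, muI μ ((k + 1 : ℕ) : ℤ) = muI μ (k : ℤ) + xiI μ (k : ℤ) := fun k => by
    push_cast; exact muI_succ μ k
  have he2 : ∀ k : ℕ, xiI μ ((k + 1 : ℕ) : ℤ) = 2 - xiI μ (k : ℤ) := fun k => by
    push_cast; exact xiI_succ μ k
  have hpred : ∀ n : ℕ, muI μ ((n : ℤ) - 1) = muI μ n - xiI μ ((n + 1 : ℕ) : ℤ) := fun n => by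
    have h1 := muI_succ μ ((n : ℤ) - 1)
    have h2 := xiI_succ μ ((n : ℤ) - 1)
    rw [sub_add_cancel] at h1 h2
    rw [he2, h2, h1]
    ring
  have h1 := scalar_iff_system (fun k => muI μ k) (fun k => xiI μ k) γ θ
    (fun n => muI μ ((n + 1 : ℕ) : ℤ) / muI μ ((n + 2 : ℕ) : ℤ) * θ (n + 1) * γ (n + 2))
    hγ hm he2 (xiI_ne_zero hμ2 hμ3) (muI_ne_zero hμ1) (fun n => rfl)
  have h2 := connection_iff_scalar γ
    (fun n => muI μ ((n + 1 : ℕ) : ℤ) / muI μ ((n + 2 : ℕ) : ℤ) * θ (n + 1) * γ (n + 2))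
    (auxA (fun k => muI μ k) (fun k => xiI μ k) γ θ) (by simp [auxA, muI]) P hP0 hP1 hPrec
  have h3 := derivative_iff_connection (fun k => muI μ k) (fun k => xiI μ k) γ θ
    (fun n => muI μ ((n + 1 : ℕ) : ℤ) / muI μ ((n + 2 : ℕ) : ℤ) * θ (n + 1) * γ (n + 2))
    hm (xiI_ne_zero hμ2 hμ3) (muI_ne_zero hμ1) (fun n => rfl)
    P (fun n => dunkl μ (P n)) hP1 (by simp [hP0, dunkl_one])
    (by simp only [hP1, dunkl_X, muI, zpow_natCast, pow_one]; congr 1; push_cast; ring)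
    (fun n => by
      simp only [xiI, zpow_natCast]
      exact dunkl_rec μ γ P hP0 hP1 hPrec n)
  have h := h1.trans (h2.symm.trans h3.symm)
  simp only [← hpred] at h
  push_cast at h
  exact h
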